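/- Let M ≥ 0, N ≥ 1, k ∈ I_{M,N}, (ℓ,η) ∈ D^k_{M,N}, and assume additionally −Re(τ) ≤ min_{1≤r≤N} Re(ℓ_r η) and −Re(τ) < min_{1≤r≤N} Re((2ℓ_r + 1 − n_k(r))η)/(n_k(r)+1). Let γ ∈ Γ^k_{M,N;τ}, j ∈ {1,…,M}, and t ∈ Ã_τ. Fix x_i ∈ t_{k_i} + γ_i + √−1·[0,π] for i < j and x_i ∈ t_{k_i} + γ_i + δ_{k_i,k_j}·τ + √−1·[0,π] for i > j. Then for every m ∈ I_{M,N}, the function x_j ↦ w_k(x; t + τ e_{k_j}) · β_m(x; t + τ e_{k_j}) / Φ_k(t + τ e_{k_j}) is π√−1-periodic in x_j and has no poles in the vertical strip {z ∈ ℂ : Re(t_{k_j} + γ_j + τ) ≤ Re(z) ≤ Re(t_{k_j} + γ_j)}, i.e. it extends holomorphically to an open neighborhood of that strip. -/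

import Mathlib

open Complex MeasureTheory

noncomputable section

namespace BQKZ

/-- `(z;p)_∞ = ∏_{m ≥ 0} (1 - z pᵐ)`; used with `p = q²`. -/
def poch (p z : ℂ) : ℂ := ∏' m : ℕ, (1 - z * p ^ m)

/-- renormalized Jacobi theta `θ(z) = (z;p)_∞ (p z⁻¹;p)_∞`, with `p = q²`. -/
def theta (p z : ℂ) : ℂ := poch p z * poch p (p * z⁻¹)

/-- `q² = e^{2τ}` where `q = e^τ`. -/
def qsq (τ : ℂ) : ℂ := exp (2 * τ)

/-- `ξ̃₊ = ξ₊ - η/2 - τ/2`. -/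
def xiP (τ η ξp : ℂ) : ℂ := ξp - η / 2 - τ / 2

/-- `ξ̃₋ = ξ₋ - η/2`. -/
def xiM (η ξm : ℂ) : ℂ := ξm - η / 2

/-- `n_k(r) = #{i : k i = r}`. -/
def nk {M N : ℕ} (k : Fin M → Fin N) (r : Fin N) : ℕ :=
  (Finset.univ.filter fun i => k i = r).card

/-- `φ_{k;r}`. -/
def phiC (η ξp ξm : ℂ) {N M : ℕ} (ℓ : Fin N → ℂ) (k : Fin M → Fin N) (r : Fin N) : ℂ :=
  (∏ i ∈ Finset.univ.filter fun i : Fin M => k i = r,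
      exp (2 * (η - ξp - ξm) +
        4 * ((M : ℂ) - ((i : ℕ) + 1) - ∑ s ∈ Finset.univ.filter fun s : Fin N => r ≤ s, ℓ s) * η)) *
    exp (-4 * ℓ r * η * ((Finset.univ.filter fun i : Fin M => r < k i).card : ℂ))

/-- `Φ_k(t)`. -/
def PhiF (τ η ξp ξm : ℂ) {N M : ℕ} (ℓ : Fin N → ℂ) (k : Fin M → Fin N) (t : Fin N → ℂ) : ℂ :=
  ∏ r, theta (qsq τ) (exp (2 * t r)) / theta (qsq τ) (phiC η ξp ξm ℓ k r * exp (2 * t r))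

/-- `F(x;t)`. -/
def Ffun (τ η : ℂ) {N : ℕ} (ℓ : Fin N → ℂ) (x : ℂ) (t : Fin N → ℂ) : ℂ :=
  ∏ s, (poch (qsq τ) (exp (-2 * (t s + x - ℓ s * η))) * poch (qsq τ) (exp (-2 * (t s - x - ℓ s * η)))) /
       (poch (qsq τ) (exp (-2 * (t s + x + ℓ s * η))) * poch (qsq τ) (exp (-2 * (t s - x + ℓ s * η))))

/-- `g(x)`. -/
def gfun (τ η ξp ξm : ℂ) (x : ℂ) : ℂ :=
  (poch (qsq τ) (qsq τ * exp (2 * (xiP τ η ξp - x))) * poch (qsq τ) (qsq τ * exp (2 * (xiM η ξm - x)))) /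
  (poch (qsq τ) (exp (2 * (-xiP τ η ξp - x))) * poch (qsq τ) (exp (2 * (-xiM η ξm - x))))

/-- `h(x)`. -/
def hfun (τ η : ℂ) (x : ℂ) : ℂ :=
  (1 - exp (-2 * x)) * poch (qsq τ) (qsq τ * exp (-2 * (x + η))) / poch (qsq τ) (exp (-2 * (x - η)))

/-- `ψ_{k;i}`. -/
def psiC (τ η ξp ξm : ℂ) {N M : ℕ} (ℓ : Fin N → ℂ) (k : Fin M → Fin N) (i : Fin M) : ℂ :=
  xiP τ η ξp + xiM η ξm + τ + ℓ (k i) * η +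
    2 * ((∑ s ∈ Finset.univ.filter fun s : Fin N => k i < s, ℓ s) - (M : ℂ) + ((i : ℕ) + 1)) * η

/-- `u_{k;i}(x;t)`. -/
def ufun (τ η ξp ξm : ℂ) {N M : ℕ} (ℓ : Fin N → ℂ) (k : Fin M → Fin N) (i : Fin M) (x : ℂ)
    (t : Fin N → ℂ) : ℂ :=
  exp (-t (k i)) * theta (qsq τ) (exp (2 * (x - t (k i) + psiC τ η ξp ξm ℓ k i))) *
    (∏ s ∈ Finset.univ.filter fun s : Fin N => k i < s,
      theta (qsq τ) (exp (2 * (x - t s - ℓ s * η)))) /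
    ∏ s ∈ Finset.univ.filter fun s : Fin N => k i ≤ s,
      theta (qsq τ) (exp (2 * (x - t s + ℓ s * η)))

/-- `w_k(x;t)/Φ_k(t)` (the weight function with the `Φ_k` prefactor cancelled). -/
def w0 (τ η ξp ξm : ℂ) {N M : ℕ} (ℓ : Fin N → ℂ) (k : Fin M → Fin N) (x : Fin M → ℂ)
    (t : Fin N → ℂ) : ℂ :=
  (∏ i, Ffun τ η ℓ (x i) t * gfun τ η ξp ξm (x i) * ufun τ η ξp ξm ℓ k i (x i) t) *
    ∏ p ∈ Finset.univ.filter fun p : Fin M × Fin M => p.1 < p.2,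
      hfun τ η (x p.1 + x p.2) * hfun τ η (x p.1 - x p.2)

/-- the weight function `w_k(x;t)`. -/
def wfun (τ η ξp ξm : ℂ) {N M : ℕ} (ℓ : Fin N → ℂ) (k : Fin M → Fin N) (x : Fin M → ℂ)
    (t : Fin N → ℂ) : ℂ :=
  PhiF τ η ξp ξm ℓ k t * w0 τ η ξp ξm ℓ k x t

/-- sign `ε_i = ±1` encoded by a boolean. -/
def sg {M : ℕ} (ε : Fin M → Bool) (i : Fin M) : ℂ := if ε i then 1 else -1

/-- `S_M k`: rearrangements of `k`. -/
def rearr {M N : ℕ} (k : Fin M → Fin N) : Finset (Fin M → Fin N) :=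
  Finset.univ.filter fun m => ∀ r, nk m r = nk k r

/-- `β_k(x;t)`, the coefficients of the boundary Bethe vectors. -/
def betaF (η ξm : ℂ) {N M : ℕ} (ℓ : Fin N → ℂ) (k : Fin M → Fin N) (x : Fin M → ℂ)
    (t : Fin N → ℂ) : ℂ :=
  exp ((∑ i, ((nk k (k i) : ℂ) / 2 - ℓ (k i))) * η) *
    ∑ m ∈ rearr k, ∑ ε : Fin M → Bool,
      (∏ i,
          sg ε i * sinh (sg ε i * x i - xiM η ξm) / sinh (t (m i) + sg ε i * x i - ℓ (m i) * η) *
            (∏ s ∈ Finset.univ.filter fun s : Fin N => m i < s,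
              sinh (t s + sg ε i * x i + ℓ s * η) / sinh (t s + sg ε i * x i - ℓ s * η)) *
            ∏ s, sinh (t s - sg ε i * x i + ℓ s * η) / sinh (t s - sg ε i * x i - ℓ s * η)) *
        (∏ p ∈ Finset.univ.filter fun p : Fin M × Fin M => p.1 < p.2,
          sinh (sg ε p.1 * x p.1 + sg ε p.2 * x p.2 + η) /
            sinh (sg ε p.1 * x p.1 + sg ε p.2 * x p.2)) *
        ∏ p ∈ Finset.univ.filter fun p : Fin M × Fin M => m p.1 < m p.2,
          sinh (sg ε p.1 * x p.1 - sg ε p.2 * x p.2 - η) /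
            sinh (sg ε p.1 * x p.1 - sg ε p.2 * x p.2)

/-- `(ℓ,η) ∈ D^k_{M,N}`. -/
def Dmn (η : ℂ) {N M : ℕ} (ℓ : Fin N → ℂ) (k : Fin M → Fin N) : Prop :=
  ∀ r, (ℓ r * η).re > max 0 (((nk k r : ℝ) - 1) / 2 * η.re)

/-- the (0-based) position `i_k(s;r) = ∑_{s' < r} n_k(s') + s`. -/
def blockIdx {M N : ℕ} (k : Fin M → Fin N) (r : Fin N) (s : ℕ) : ℕ :=
  (∑ s' ∈ Finset.univ.filter fun s' : Fin N => s' < r, nk k s') + s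

/-- `γ ∈ Γ^k_{M,N}`. -/
def Gam (η : ℂ) {N M : ℕ} (ℓ : Fin N → ℂ) (k : Fin M → Fin N) (γ : Fin M → ℂ) : Prop :=
  (∀ i, -(ℓ (k i) * η).re < (γ i).re ∧ (γ i).re < (ℓ (k i) * η).re) ∧
    ∀ r : Fin N, ∀ s : ℕ, s + 1 < nk k r →
      ∀ (h1 : blockIdx k r s < M) (h2 : blockIdx k r (s + 1) < M),
        (γ ⟨blockIdx k r (s + 1), h2⟩).re ≤ (γ ⟨blockIdx k r s, h1⟩).re ∧
          (γ ⟨blockIdx k r (s + 1), h2⟩).re + η.re < (γ ⟨blockIdx k r s, h1⟩).re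

/-- `γ ∈ Γ^k_{M,N;τ}`. -/
def GamTau (τ η : ℂ) {N M : ℕ} (ℓ : Fin N → ℂ) (k : Fin M → Fin N) (γ : Fin M → ℂ) : Prop :=
  Gam η ℓ k γ ∧
    (∀ i, -(ℓ (k i) * η + τ).re < (γ i).re ∧ (γ i).re < (ℓ (k i) * η + τ).re) ∧
    ∀ r : Fin N, ∀ s : ℕ, s + 1 < nk k r →
      ∀ (h1 : blockIdx k r s < M) (h2 : blockIdx k r (s + 1) < M),
        (γ ⟨blockIdx k r (s + 1), h2⟩).re + (η - τ).re < (γ ⟨blockIdx k r s, h1⟩).re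

/-- `Λ₊ = max_s Re(ℓ_s η)`. -/
def Lam (η : ℂ) {N : ℕ} (ℓ : Fin N → ℂ) : ℝ := ⨆ s, (ℓ s * η).re

/-- the sector `Ã`. -/
def Atil (τ η ξp ξm : ℂ) {N : ℕ} (ℓ : Fin N → ℂ) : Set (Fin N → ℂ) :=
  {t | (∀ i j : Fin N, (j : ℕ) = (i : ℕ) + 1 → (t i - t j).re > 2 * Lam η ℓ + max η.re 0) ∧
       ∀ i : Fin N, (i : ℕ) = N - 1 →
         (t i).re > Lam η ℓ + max (max (η / 2).re 0) (max (-xiP τ η ξp).re (-xiM η ξm).re)}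

/-- the sector `Ã_τ`. -/
def AtilTau (τ η ξp ξm : ℂ) {N : ℕ} (ℓ : Fin N → ℂ) : Set (Fin N → ℂ) :=
  {t | (∀ i j : Fin N, (j : ℕ) = (i : ℕ) + 1 →
          (t i - t j).re > 2 * Lam η ℓ + max η.re 0 - τ.re) ∧
       ∀ i : Fin N, (i : ℕ) = N - 1 →
         (t i).re > Lam η ℓ + max (max (η / 2).re 0) (max (-xiP τ η ξp).re (-xiM η ξm).re) - τ.re}

/-- the cone `Q₊ ⊂ ℤ^N` spanned by the simple roots `e_i - e_{i+1}` and `e_N`. -/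
def Qplus {N : ℕ} : Set (Fin N → ℤ) :=
  {α | ∃ β : Fin N → ℕ, ∀ j : Fin N,
    α j = (β j : ℤ) -
      if _h : 0 < (j : ℕ) then
        (β ⟨(j : ℕ) - 1, lt_of_le_of_lt (Nat.sub_le _ _) j.isLt⟩ : ℤ)
      else 0}

/-- the cube `[0,π]^M` over which the contour integrals are iterated. -/
def box (M : ℕ) : Set (Fin M → ℝ) := Set.univ.pi fun _ => Set.Icc (0 : ℝ) Real.pi

/-- the point of the contour `C^γ_k(t)` with parameters `s ∈ [0,π]^M`. -/
def cpt {M N : ℕ} (k : Fin M → Fin N) (γ : Fin M → ℂ) (t : Fin N → ℂ) (s : Fin M → ℝ) :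
    Fin M → ℂ := fun i => t (k i) + γ i + (s i : ℂ) * I

/-- the iterated contour integral over `C^γ_k(t)`. -/
def contourIntegral {M N : ℕ} (k : Fin M → Fin N) (γ : Fin M → ℂ) (t : Fin N → ℂ)
    (f : (Fin M → ℂ) → ℂ) : ℂ :=
  I ^ M * ∫ s in box M, f (cpt k γ t s)

/-- nonvanishing of all denominators occurring in `w_k(x;t)/Φ_k(t)`. -/
def w0DenomOK (τ η ξp ξm : ℂ) {N M : ℕ} (ℓ : Fin N → ℂ) (k : Fin M → Fin N) (x : Fin M → ℂ)
    (t : Fin N → ℂ) : Prop :=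
  (∀ s : Fin N, ∀ i : Fin M,
      poch (qsq τ) (exp (-2 * (t s + x i + ℓ s * η))) ≠ 0 ∧
      poch (qsq τ) (exp (-2 * (t s - x i + ℓ s * η))) ≠ 0) ∧
  (∀ i : Fin M,
      poch (qsq τ) (exp (2 * (-xiP τ η ξp - x i))) ≠ 0 ∧
      poch (qsq τ) (exp (2 * (-xiM η ξm - x i))) ≠ 0) ∧
  (∀ i : Fin M, ∀ s : Fin N, k i ≤ s → theta (qsq τ) (exp (2 * (x i - t s + ℓ s * η))) ≠ 0) ∧
  ∀ i j : Fin M, i < j →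
      poch (qsq τ) (exp (-2 * (x i + x j - η))) ≠ 0 ∧
      poch (qsq τ) (exp (-2 * (x i - x j - η))) ≠ 0

/-- nonvanishing of the theta denominators of `Φ_k(t)`. -/
def PhiDenomOK (τ η ξp ξm : ℂ) {N M : ℕ} (ℓ : Fin N → ℂ) (k : Fin M → Fin N)
    (t : Fin N → ℂ) : Prop :=
  ∀ r, theta (qsq τ) (phiC η ξp ξm ℓ k r * exp (2 * t r)) ≠ 0

/-- nonvanishing of all sinh denominators occurring in `β_m(x;t)` (for any rearrangement `m`). -/
def betaDenomOK (η : ℂ) {N M : ℕ} (ℓ : Fin N → ℂ) (x : Fin M → ℂ) (t : Fin N → ℂ) : Prop :=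
  (∀ s : Fin N, ∀ i : Fin M,
      sinh (t s + x i - ℓ s * η) ≠ 0 ∧ sinh (t s - x i - ℓ s * η) ≠ 0) ∧
  ∀ i j : Fin M, i < j → sinh (x i + x j) ≠ 0 ∧ sinh (x i - x j) ≠ 0

lemma poch_diff (p : ℂ) (hp : ‖p‖ < 1) : Differentiable ℂ (poch p) := by
  have hsum : Summable fun n : ℕ => ‖p‖ ^ n := summable_geometric_of_lt_one (norm_nonneg _) hp
  have key : ∀ R : ℝ, DifferentiableOn ℂ (poch p) (Metric.ball (0:ℂ) R) := by
    intro R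
    have h : HasProdLocallyUniformlyOn (fun (n : ℕ) (z : ℂ) => 1 + (-(z * p ^ n)))
        (fun z => ∏' n : ℕ, (1 + (-(z * p ^ n)))) (Metric.ball (0:ℂ) R) := by
      refine Summable.hasProdLocallyUniformlyOn_nat_one_add Metric.isOpen_ball
        (hsum.mul_left R) (.of_forall fun n z hz ↦ ?_) fun n ↦ by fun_prop
      rw [norm_neg, norm_mul, norm_pow]
      have : ‖z‖ < R := by simpa using hz
      gcongr
    have h2 := h.differentiableOn (.of_forall fun s => by
      simpa [Finset.prod_fn] using DifferentiableOn.fun_finsetProd (by fun_prop)) Metric.isOpen_ball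
    refine h2.congr fun z _ => ?_
    simp [poch, sub_eq_add_neg]
  intro z
  exact (key (‖z‖ + 1)).differentiableAt (Metric.isOpen_ball.mem_nhds (by simp))

lemma poch_ne (p z : ℂ) (hp : ‖p‖ < 1) (hz : ‖z‖ < 1) : poch p z ≠ 0 := by
  have hsum : Summable fun n : ℕ => ‖p‖ ^ n := summable_geometric_of_lt_one (norm_nonneg _) hp
  have := tprod_one_add_ne_zero_of_summable (f := fun n : ℕ => -(z * p ^ n)) ?_ ?_
  · simpa [poch, sub_eq_add_neg] using this
  · intro i h
    have h1 : z * p ^ i = 1 := by linear_combination -h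
    have h2 : ‖z * p ^ i‖ < 1 := by
      rw [norm_mul, norm_pow]
      calc ‖z‖ * ‖p‖ ^ i ≤ ‖z‖ * 1 := by gcongr; exact pow_le_one₀ (norm_nonneg _) hp.le
        _ < 1 := by simpa using hz
    rw [h1] at h2; simp at h2
  · simpa using hsum.mul_left ‖z‖

lemma qsq_norm (τ : ℂ) (hτ : τ.re < 0) : ‖qsq τ‖ < 1 := by
  rw [qsq, Complex.norm_exp]; simp; linarith

lemma poch_exp_ne (τ y : ℂ) (hτ : τ.re < 0) (hy : y.re < 0) : poch (qsq τ) (exp (2 * y)) ≠ 0 := by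
  apply poch_ne _ _ (qsq_norm τ hτ)
  rw [Complex.norm_exp]; simp; linarith

lemma poch_qexp_ne (τ y : ℂ) (hτ : τ.re < 0) (hy : y.re < 0) :
    poch (qsq τ) (qsq τ * exp (2 * y)) ≠ 0 := by
  apply poch_ne _ _ (qsq_norm τ hτ)
  rw [norm_mul, Complex.norm_exp]
  have h1 := qsq_norm τ hτ
  have h2 : Real.exp (2 * y).re < 1 := by simp; linarith
  nlinarith [norm_nonneg (qsq τ), Real.exp_pos (2 * y).re]

lemma sinh_ne_of_re {y : ℂ} (hy : y.re ≠ 0) : sinh y ≠ 0 := by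
  intro h
  have h1 : exp y = exp (-y) := by
    rw [Complex.sinh] at h
    linear_combination 2 * h
  have h2 := congrArg norm h1
  rw [Complex.norm_exp, Complex.norm_exp, Real.exp_eq_exp, Complex.neg_re] at h2
  exact hy (by linarith)

lemma analytic_poch {τ : ℂ} (hτ : τ.re < 0) {f : ℂ → ℂ} {z : ℂ} (hf : AnalyticAt ℂ f z) :
    AnalyticAt ℂ (fun w => poch (qsq τ) (f w)) z :=
  AnalyticAt.fun_comp ((poch_diff _ (qsq_norm τ hτ)).analyticAt _) hf


lemma prod_pairs {M N : ℕ} (m : Fin M → Fin N) (f : Fin M × Fin M → ℂ) :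
    ∏ p ∈ Finset.univ.filter (fun p : Fin M × Fin M => m p.1 < m p.2), f p =
    ∏ p ∈ Finset.univ.filter (fun p : Fin M × Fin M => p.1 < p.2),
      (if m p.1 < m p.2 then f p else if m p.2 < m p.1 then f p.swap else 1) := by
  have e1 : ∀ p : Fin M × Fin M, (if m p.1 < m p.2 then f p else 1) =
      (if p.1 < p.2 then (if m p.1 < m p.2 then f p else 1) else 1) *
      (if p.2 < p.1 then (if m p.1 < m p.2 then f p else 1) else 1) := by
    rintro ⟨a, b⟩
    rcases lt_trichotomy a b with h | h | h
    · simp [h, h.le, not_lt.2 h.le]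
    · subst h; simp
    · simp [h, h.le, not_lt.2 h.le]
  rw [Finset.prod_filter, Finset.prod_congr rfl (fun p _ => e1 p), Finset.prod_mul_distrib]
  rw [← (Equiv.prodComm (Fin M) (Fin M)).prod_comp (fun p => 
      (if p.2 < p.1 then (if m p.1 < m p.2 then f p else 1) else 1)),
    ← Finset.prod_mul_distrib, Finset.prod_filter]
  refine Finset.prod_congr rfl fun p _ => ?_
  rcases p with ⟨a, b⟩
  by_cases h : a < b
  · rcases lt_trichotomy (m a) (m b) with h' | h' | h' <;>
      simp [h, h', not_lt.2 h'.le]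
  · simp [h]

lemma sinh_div_per {a b a' b' : ℂ} (n : ℤ) (ha : a' = a + n * (Real.pi * I))
    (hb : b' = b + n * (Real.pi * I)) : sinh a' / sinh b' = sinh a / sinh b := by
  have e : (n : ℂ) * (Real.pi * I) = ((n * Real.pi : ℝ) : ℂ) * I := by push_cast; ring
  have hs : sinh ((n : ℂ) * (Real.pi * I)) = 0 := by
    rw [e, Complex.sinh_mul_I, ← Complex.ofReal_sin, Real.sin_int_mul_pi]; simp
  have hc : cosh ((n : ℂ) * (Real.pi * I)) ≠ 0 := by
    intro h
    have := Complex.cosh_sq_sub_sinh_sq ((n : ℂ) * (Real.pi * I))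
    rw [hs, h] at this
    simp at this
  rw [ha, hb, Complex.sinh_add, Complex.sinh_add, hs, mul_zero, add_zero, mul_zero, add_zero,
    mul_div_mul_right _ _ hc]

lemma exp_per {a a' : ℂ} (n : ℤ) (h : a' = a + n * (2 * Real.pi * I)) : exp a' = exp a := by
  rw [h, Complex.exp_add, Complex.exp_int_mul_two_pi_mul_I, mul_one]

lemma Ffun_per (τ η : ℂ) {N : ℕ} (ℓ : Fin N → ℂ) (x : ℂ) (t : Fin N → ℂ) (n : ℤ) :
    Ffun τ η ℓ (x + n * (Real.pi * I)) t = Ffun τ η ℓ x t := by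
  unfold Ffun
  refine Finset.prod_congr rfl fun s _ => ?_
  congr 3
  · exact exp_per (-n) (by push_cast; ring)
  · exact exp_per n (by push_cast; ring)
  · exact exp_per (-n) (by push_cast; ring)
  · exact exp_per n (by push_cast; ring)

lemma gfun_per (τ η ξp ξm : ℂ) (x : ℂ) (n : ℤ) :
    gfun τ η ξp ξm (x + n * (Real.pi * I)) = gfun τ η ξp ξm x := by
  have e : ∀ a : ℂ, exp (2 * (a - (x + n * (Real.pi * I)))) = exp (2 * (a - x)) := fun a =>
    exp_per (-n) (by push_cast; ring)
  simp only [gfun, e]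

lemma hfun_per (τ η : ℂ) {x x' : ℂ} (n : ℤ) (h : x' = x + n * (Real.pi * I)) :
    hfun τ η x' = hfun τ η x := by
  have e0 : exp (-2 * x') = exp (-2 * x) := exp_per (-n) (by rw [h]; push_cast; ring)
  have e1 : exp (-2 * (x' + η)) = exp (-2 * (x + η)) := exp_per (-n) (by rw [h]; push_cast; ring)
  have e2 : exp (-2 * (x' - η)) = exp (-2 * (x - η)) := exp_per (-n) (by rw [h]; push_cast; ring)
  simp only [hfun, e0, e1, e2]

lemma ufun_per (τ η ξp ξm : ℂ) {N M : ℕ} (ℓ : Fin N → ℂ) (k : Fin M → Fin N) (i : Fin M) (x : ℂ)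
    (t : Fin N → ℂ) (n : ℤ) :
    ufun τ η ξp ξm ℓ k i (x + n * (Real.pi * I)) t = ufun τ η ξp ξm ℓ k i x t := by
  have e1 : ∀ a b : ℂ, exp (2 * (x + n * (Real.pi * I) - a + b)) = exp (2 * (x - a + b)) :=
    fun a b => exp_per n (by push_cast; ring)
  have e2 : ∀ a b : ℂ, exp (2 * (x + n * (Real.pi * I) - a - b)) = exp (2 * (x - a - b)) :=
    fun a b => exp_per n (by push_cast; ring)
  simp only [ufun, e1, e2]

lemma w0_per (τ η ξp ξm : ℂ) {N M : ℕ} (ℓ : Fin N → ℂ) (k : Fin M → Fin N) (x x' : Fin M → ℂ)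
    (t : Fin N → ℂ) (n : Fin M → ℤ) (h : ∀ i, x' i = x i + n i * (Real.pi * I)) :
    w0 τ η ξp ξm ℓ k x' t = w0 τ η ξp ξm ℓ k x t := by
  unfold w0
  congr 1
  · refine Finset.prod_congr rfl fun i _ => ?_
    rw [h, Ffun_per, gfun_per, ufun_per]
  · refine Finset.prod_congr rfl fun p _ => ?_
    rw [hfun_per τ η (x := x p.1 + x p.2) (x' := x' p.1 + x' p.2) (n p.1 + n p.2) (by rw [h, h]; push_cast; ring),
      hfun_per τ η (x := x p.1 - x p.2) (x' := x' p.1 - x' p.2) (n p.1 - n p.2) (by rw [h, h]; push_cast; ring)]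

lemma sg_int {M : ℕ} (ε : Fin M → Bool) (i : Fin M) : ∃ c : ℤ, sg ε i = c := by
  unfold sg
  split_ifs
  · exact ⟨1, by simp⟩
  · exact ⟨-1, by simp⟩

lemma betaF_per (η ξm : ℂ) {N M : ℕ} (ℓ : Fin N → ℂ) (k : Fin M → Fin N) (x x' : Fin M → ℂ)
    (t : Fin N → ℂ) (n : Fin M → ℤ) (h : ∀ i, x' i = x i + n i * (Real.pi * I)) :
    betaF η ξm ℓ k x' t = betaF η ξm ℓ k x t := by
  unfold betaF
  refine congrArg₂ (fun a b : ℂ => a * b) rfl ?_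
  refine Finset.sum_congr rfl fun m _ => Finset.sum_congr rfl fun ε _ => ?_
  choose c hc using sg_int ε
  refine congrArg₂ (fun a b : ℂ => a * b) (congrArg₂ (fun a b : ℂ => a * b) ?_ ?_) ?_
  · · refine Finset.prod_congr rfl fun i _ => ?_
      rw [mul_div_assoc, mul_div_assoc]
      refine congrArg₂ (fun a b : ℂ => a * b) (congrArg₂ (fun a b : ℂ => a * b) (congrArg₂ (fun a b : ℂ => a * b) rfl ?_) ?_) ?_
      · · exact sinh_div_per (c i * n i) (by rw [h, hc]; push_cast; ring)
            (by rw [h, hc]; push_cast; ring)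
      · · refine Finset.prod_congr rfl fun s _ => ?_
          exact sinh_div_per (c i * n i) (by rw [h, hc]; push_cast; ring)
            (by rw [h, hc]; push_cast; ring)
      · refine Finset.prod_congr rfl fun s _ => ?_
        exact sinh_div_per (-(c i * n i)) (by rw [h, hc]; push_cast; ring)
            (by rw [h, hc]; push_cast; ring)
  · · refine Finset.prod_congr rfl fun p _ => ?_
      exact sinh_div_per (c p.1 * n p.1 + c p.2 * n p.2) (by rw [h, h, hc, hc]; push_cast; ring)
            (by rw [h, h, hc, hc]; push_cast; ring)
  · refine Finset.prod_congr rfl fun p _ => ?_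
    exact sinh_div_per (c p.1 * n p.1 - c p.2 * n p.2) (by rw [h, h, hc, hc]; push_cast; ring)
            (by rw [h, h, hc, hc]; push_cast; ring)

/-- Cancelled single-variable factor. -/
def At (τ η ξp ξm : ℂ) {N M : ℕ} (ℓ : Fin N → ℂ) (k : Fin M → Fin N) (i : Fin M) (x : ℂ)
    (t : Fin N → ℂ) : ℂ :=
  gfun τ η ξp ξm x *
  (exp (-t (k i)) * theta (qsq τ) (exp (2 * (x - t (k i) + psiC τ η ξp ξm ℓ k i)))) *
  ∏ s, (poch (qsq τ) (exp (2 * -(t s + x - ℓ s * η))) / poch (qsq τ) (exp (2 * -(t s + x + ℓ s * η))) *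
    (if s < k i then poch (qsq τ) (exp (2 * -(t s - x - ℓ s * η))) /
        poch (qsq τ) (exp (2 * -(t s - x + ℓ s * η)))
     else if s = k i then 1 / (poch (qsq τ) (exp (2 * -(t s - x + ℓ s * η))) *
        poch (qsq τ) (qsq τ * exp (2 * -(x - t s + ℓ s * η))))
     else poch (qsq τ) (qsq τ * exp (2 * -(x - t s - ℓ s * η))) /
        poch (qsq τ) (qsq τ * exp (2 * -(x - t s + ℓ s * η)))))

lemma At_eq (τ η ξp ξm : ℂ) {N M : ℕ} (ℓ : Fin N → ℂ) (k : Fin M → Fin N) (i : Fin M) (x : ℂ)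
    (t : Fin N → ℂ)
    (h1 : ∀ s : Fin N, poch (qsq τ) (exp (-2 * (t s - x + ℓ s * η))) ≠ 0)
    (h2 : ∀ s : Fin N, k i ≤ s → theta (qsq τ) (exp (2 * (x - t s + ℓ s * η))) ≠ 0) :
    Ffun τ η ℓ x t * gfun τ η ξp ξm x * ufun τ η ξp ξm ℓ k i x t = At τ η ξp ξm ℓ k i x t := by
  have e1 : ∀ s, theta (qsq τ) (exp (2 * (x - t s - ℓ s * η))) =
      poch (qsq τ) (exp (2 * -(t s - x + ℓ s * η))) *
      poch (qsq τ) (qsq τ * exp (2 * -(x - t s - ℓ s * η))) := by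
    intro s; unfold theta; rw [← Complex.exp_neg]; ring_nf
  have e2 : ∀ s, theta (qsq τ) (exp (2 * (x - t s + ℓ s * η))) =
      poch (qsq τ) (exp (2 * -(t s - x - ℓ s * η))) *
      poch (qsq τ) (qsq τ * exp (2 * -(x - t s + ℓ s * η))) := by
    intro s; unfold theta; rw [← Complex.exp_neg]; ring_nf
  have e3 : ∀ y : ℂ, -2 * y = 2 * -y := fun y => by ring
  simp only [e2] at h2
  simp only [e3] at h1
  unfold Ffun ufun At
  simp only [e1, e2, e3, Finset.prod_filter]
  have key : (∏ s, poch (qsq τ) (exp (2 * -(t s + x - ℓ s * η))) *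
        poch (qsq τ) (exp (2 * -(t s - x - ℓ s * η))) /
        (poch (qsq τ) (exp (2 * -(t s + x + ℓ s * η))) *
          poch (qsq τ) (exp (2 * -(t s - x + ℓ s * η))))) *
      ((∏ s, if k i < s then poch (qsq τ) (exp (2 * -(t s - x + ℓ s * η))) *
      poch (qsq τ) (qsq τ * exp (2 * -(x - t s - ℓ s * η))) else 1) /
      (∏ s, if k i ≤ s then poch (qsq τ) (exp (2 * -(t s - x - ℓ s * η))) *
      poch (qsq τ) (qsq τ * exp (2 * -(x - t s + ℓ s * η))) else 1)) =
      ∏ s, (poch (qsq τ) (exp (2 * -(t s + x - ℓ s * η))) / poch (qsq τ) (exp (2 * -(t s + x + ℓ s * η))) *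
    (if s < k i then poch (qsq τ) (exp (2 * -(t s - x - ℓ s * η))) /
        poch (qsq τ) (exp (2 * -(t s - x + ℓ s * η)))
     else if s = k i then 1 / (poch (qsq τ) (exp (2 * -(t s - x + ℓ s * η))) *
        poch (qsq τ) (qsq τ * exp (2 * -(x - t s + ℓ s * η))))
     else poch (qsq τ) (qsq τ * exp (2 * -(x - t s - ℓ s * η))) /
        poch (qsq τ) (qsq τ * exp (2 * -(x - t s + ℓ s * η))))) := by
    rw [← Finset.prod_div_distrib, ← Finset.prod_mul_distrib]
    refine Finset.prod_congr rfl fun s _ => ?_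
    have h1 := h1 s
    have h2 := h2 s
    generalize poch (qsq τ) (exp (2 * -(t s + x - ℓ s * η))) = P1 at *
    generalize poch (qsq τ) (exp (2 * -(t s - x - ℓ s * η))) = P2 at *
    generalize poch (qsq τ) (exp (2 * -(t s + x + ℓ s * η))) = P3 at *
    generalize poch (qsq τ) (exp (2 * -(t s - x + ℓ s * η))) = P4 at *
    generalize poch (qsq τ) (qsq τ * exp (2 * -(x - t s - ℓ s * η))) = R1 at *
    generalize poch (qsq τ) (qsq τ * exp (2 * -(x - t s + ℓ s * η))) = R2 at *
    have aux : P1 * P2 / (P3 * P4) = P1 / P3 * (P2 / P4) := mul_div_mul_comm ..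
    rw [aux, mul_assoc]
    congr 1
    rcases lt_trichotomy s (k i) with h | h | h
    · simp [h, not_lt.2 h.le, not_le.2 h]
    · have h2 := h2 h.ge
      have hP2 := left_ne_zero_of_mul h2
      have hR2 := right_ne_zero_of_mul h2
      simp only [h, lt_irrefl, le_refl, if_true, if_false]
      field_simp
    · have h2 := h2 h.le
      have hP2 := left_ne_zero_of_mul h2
      have hR2 := right_ne_zero_of_mul h2
      simp only [h, h.le, not_lt.2 h.le, h.ne', if_true, if_false]
      field_simp
  rw [← key]
  ring

/-- `h(y) / sinh y` cancelled. -/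
def h1f (τ η y : ℂ) : ℂ := 2 * exp (-y) * poch (qsq τ) (qsq τ * exp (2 * -(y + η))) /
  poch (qsq τ) (exp (2 * -(y - η)))

lemma h1f_eq (τ η y : ℂ) : hfun τ η y = sinh y * h1f τ η y := by
  unfold hfun h1f
  have e3 : ∀ y : ℂ, -2 * y = 2 * -y := fun y => by ring
  have e : 1 - exp (2 * -y) = sinh y * (2 * exp (-y)) := by
    rw [Complex.sinh, two_mul, Complex.exp_add]
    have : exp y * exp (-y) = 1 := by rw [← Complex.exp_add]; simp
    linear_combination -this
  rw [e3, e3, e3, e]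
  ring

/-- numerator of the cancelled pair factor -/
def pairN {M N : ℕ} (η : ℂ) (m : Fin M → Fin N) (p : Fin M × Fin M) (a b : ℂ) : ℂ :=
  sinh (a + b + η) * (if m p.1 < m p.2 then sinh (a - b - η)
    else if m p.2 < m p.1 then - sinh (b - a - η) else sinh (a - b))

lemma sinh_mul_sg {M : ℕ} (ε : Fin M → Bool) (i j : Fin M) (a b : ℂ) :
    sinh (a + b) * sinh (a - b) =
      sinh (sg ε i * a + sg ε j * b) * sinh (sg ε i * a - sg ε j * b) := by
  have e : ∀ u v : ℂ, sinh (u + v) * sinh (u - v) = sinh u ^ 2 - sinh v ^ 2 := by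
    intro u v
    rw [Complex.sinh_add, Complex.sinh_sub]
    linear_combination (sinh u ^ 2) * Complex.cosh_sq v - (sinh v ^ 2) * Complex.cosh_sq u
  have s : ∀ l (u : ℂ), sinh (sg ε l * u) ^ 2 = sinh u ^ 2 := by
    intro l u; unfold sg; split_ifs <;> simp
  rw [e, e, s, s]

lemma pair_eq {M N : ℕ} (τ η : ℂ) (m : Fin M → Fin N) (ε : Fin M → Bool) (x : Fin M → ℂ)
    (p : Fin M × Fin M) (h1 : sinh (x p.1 + x p.2) ≠ 0) (h2 : sinh (x p.1 - x p.2) ≠ 0) :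
    (hfun τ η (x p.1 + x p.2) * hfun τ η (x p.1 - x p.2)) *
    ((sinh (sg ε p.1 * x p.1 + sg ε p.2 * x p.2 + η) /
            sinh (sg ε p.1 * x p.1 + sg ε p.2 * x p.2)) *
     (if m p.1 < m p.2 then sinh (sg ε p.1 * x p.1 - sg ε p.2 * x p.2 - η) /
            sinh (sg ε p.1 * x p.1 - sg ε p.2 * x p.2)
      else if m p.2 < m p.1 then sinh (sg ε p.2 * x p.2 - sg ε p.1 * x p.1 - η) /
            sinh (sg ε p.2 * x p.2 - sg ε p.1 * x p.1) else 1)) =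
    h1f τ η (x p.1 + x p.2) * h1f τ η (x p.1 - x p.2) *
      pairN η m p (sg ε p.1 * x p.1) (sg ε p.2 * x p.2) := by
  have h := sinh_mul_sg ε p.1 p.2 (x p.1) (x p.2)
  have h0 := mul_ne_zero h1 h2
  rw [h] at h0
  rw [h1f_eq, h1f_eq]
  unfold pairN
  generalize sg ε p.1 * x p.1 = a at *
  generalize sg ε p.2 * x p.2 = b at *
  have ha := left_ne_zero_of_mul h0
  have hb := right_ne_zero_of_mul h0
  have hba : sinh (b - a) = - sinh (a - b) := by rw [← Complex.sinh_neg]; ring_nf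
  rw [hba]
  have : sinh (x p.1 + x p.2) * h1f τ η (x p.1 + x p.2) * (sinh (x p.1 - x p.2) * h1f τ η (x p.1 - x p.2))
    = (sinh (a + b) * sinh (a - b)) * (h1f τ η (x p.1 + x p.2) * h1f τ η (x p.1 - x p.2)) := by
    rw [← h]; ring
  rw [this]
  split_ifs <;> field_simp

/-- β single-variable factor -/
def Bt (η ξm : ℂ) {N M : ℕ} (ℓ : Fin N → ℂ) (m : Fin M → Fin N) (ε : Fin M → Bool) (i : Fin M)
    (x : ℂ) (t : Fin N → ℂ) : ℂ :=
  sg ε i * sinh (sg ε i * x - xiM η ξm) / sinh (t (m i) + sg ε i * x - ℓ (m i) * η) *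
            (∏ s ∈ Finset.univ.filter fun s : Fin N => m i < s,
              sinh (t s + sg ε i * x + ℓ s * η) / sinh (t s + sg ε i * x - ℓ s * η)) *
            ∏ s, sinh (t s - sg ε i * x + ℓ s * η) / sinh (t s - sg ε i * x - ℓ s * η)

/-- The cancelled function. -/
def Gf (τ η ξp ξm : ℂ) {N M : ℕ} (ℓ : Fin N → ℂ) (k m : Fin M → Fin N) (x : Fin M → ℂ)
    (t : Fin N → ℂ) : ℂ :=
  exp ((∑ i, ((nk m (m i) : ℂ) / 2 - ℓ (m i))) * η) *
    ∑ m' ∈ rearr m, ∑ ε : Fin M → Bool,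
      (∏ i, At τ η ξp ξm ℓ k i (x i) t) * (∏ i, Bt η ξm ℓ m' ε i (x i) t) *
      ∏ p ∈ Finset.univ.filter fun p : Fin M × Fin M => p.1 < p.2,
        (h1f τ η (x p.1 + x p.2) * h1f τ η (x p.1 - x p.2) *
          pairN η m' p (sg ε p.1 * x p.1) (sg ε p.2 * x p.2))

lemma Gf_eq (τ η ξp ξm : ℂ) {N M : ℕ} (ℓ : Fin N → ℂ) (k m : Fin M → Fin N) (x : Fin M → ℂ)
    (t : Fin N → ℂ) (hw : w0DenomOK τ η ξp ξm ℓ k x t) (hb : betaDenomOK η ℓ x t) :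
    Gf τ η ξp ξm ℓ k m x t = w0 τ η ξp ξm ℓ k x t * betaF η ξm ℓ m x t := by
  obtain ⟨w1, -, w3, -⟩ := hw
  unfold Gf w0 betaF
  rw [Finset.prod_congr rfl (fun i _ => At_eq τ η ξp ξm ℓ k i (x i) t (fun s => (w1 s i).2) (w3 i)),
    mul_left_comm]
  refine congrArg₂ (fun a b : ℂ => a * b) rfl ?_
  rw [Finset.mul_sum]
  refine Finset.sum_congr rfl fun m' _ => ?_
  rw [Finset.mul_sum]
  refine Finset.sum_congr rfl fun ε _ => ?_
  rw [prod_pairs m' (fun p => sinh (sg ε p.1 * x p.1 - sg ε p.2 * x p.2 - η) /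
            sinh (sg ε p.1 * x p.1 - sg ε p.2 * x p.2))]
  rw [← Finset.prod_congr rfl (fun p hp => pair_eq τ η m' ε x p
    (hb.2 p.1 p.2 (Finset.mem_filter.1 hp).2).1 (hb.2 p.1 p.2 (Finset.mem_filter.1 hp).2).2)]
  rw [Finset.prod_mul_distrib, Finset.prod_mul_distrib (s := Finset.univ.filter _)
    (f := fun p : Fin M × Fin M => sinh (sg ε p.1 * x p.1 + sg ε p.2 * x p.2 + η) /
            sinh (sg ε p.1 * x p.1 + sg ε p.2 * x p.2))]
  simp only [Prod.fst_swap, Prod.snd_swap]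
  change _ = _ * _ * ((∏ i, Bt η ξm ℓ m' ε i (x i) t) * _ * _)
  ring

lemma re_neg_of {y : ℂ} (h : 0 < y.re) : (-y).re < 0 := by simpa using h

lemma gfun_analytic (τ η ξp ξm : ℂ) (hτ : τ.re < 0) (z0 : ℂ)
    (h1 : 0 < (xiP τ η ξp + z0).re) (h2 : 0 < (xiM η ξm + z0).re) :
    AnalyticAt ℂ (fun z => gfun τ η ξp ξm z) z0 := by
  unfold gfun
  refine AnalyticAt.fun_div (AnalyticAt.fun_mul (analytic_poch hτ (by fun_prop)) (analytic_poch hτ (by fun_prop)))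
    (AnalyticAt.fun_mul (analytic_poch hτ (by fun_prop)) (analytic_poch hτ (by fun_prop))) ?_
  refine mul_ne_zero (poch_exp_ne _ _ hτ ?_) (poch_exp_ne _ _ hτ ?_)
  · simp at h1 ⊢; linarith
  · simp at h2 ⊢; linarith

lemma At_analytic (τ η ξp ξm : ℂ) (hτ : τ.re < 0) {N M : ℕ} (ℓ : Fin N → ℂ) (k : Fin M → Fin N)
    (j : Fin M) (z0 : ℂ) (t : Fin N → ℂ)
    (ha : ∀ s, 0 < (t s + z0 + ℓ s * η).re)
    (hb : ∀ s, s ≤ k j → 0 < (t s - z0 + ℓ s * η).re)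
    (hc : ∀ s, k j ≤ s → 0 < (z0 - t s + ℓ s * η).re)
    (h1 : 0 < (xiP τ η ξp + z0).re) (h2 : 0 < (xiM η ξm + z0).re) :
    AnalyticAt ℂ (fun z => At τ η ξp ξm ℓ k j z t) z0 := by
  unfold At
  refine AnalyticAt.fun_mul (AnalyticAt.fun_mul (gfun_analytic τ η ξp ξm hτ z0 h1 h2)
    (AnalyticAt.fun_mul analyticAt_const ?_)) ?_
  · unfold theta
    refine AnalyticAt.fun_mul (analytic_poch hτ (by fun_prop)) (analytic_poch hτ ?_)
    simp only [← Complex.exp_neg]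
    fun_prop
  · refine Finset.analyticAt_fun_prod _ fun s _ => ?_
    refine AnalyticAt.fun_mul (AnalyticAt.fun_div (analytic_poch hτ (by fun_prop))
      (analytic_poch hτ (by fun_prop)) (poch_exp_ne _ _ hτ (re_neg_of (ha s)))) ?_
    split_ifs with h h'
    · exact AnalyticAt.fun_div (analytic_poch hτ (by fun_prop))
        (analytic_poch hτ (by fun_prop)) (poch_exp_ne _ _ hτ (re_neg_of (hb s h.le)))
    · exact AnalyticAt.fun_div analyticAt_const (AnalyticAt.fun_mul (analytic_poch hτ (by fun_prop))
        (analytic_poch hτ (by fun_prop))) (mul_ne_zero (poch_exp_ne _ _ hτ (re_neg_of (hb s h'.le)))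
        (poch_qexp_ne _ _ hτ (re_neg_of (hc s h'.ge))))
    · exact AnalyticAt.fun_div (analytic_poch hτ (by fun_prop))
        (analytic_poch hτ (by fun_prop)) (poch_qexp_ne _ _ hτ (re_neg_of (hc s (not_lt.1 h))))

lemma analytic_sinh {f : ℂ → ℂ} {z : ℂ} (hf : AnalyticAt ℂ f z) :
    AnalyticAt ℂ (fun w => sinh (f w)) z :=
  AnalyticAt.fun_comp (Complex.differentiable_sinh.analyticAt _) hf

lemma Bt_analytic (η ξm : ℂ) {N M : ℕ} (ℓ : Fin N → ℂ) (m : Fin M → Fin N) (ε : Fin M → Bool)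
    (j : Fin M) (z0 : ℂ) (t : Fin N → ℂ)
    (h1 : ∀ s, (t s + z0 - ℓ s * η).re ≠ 0) (h2 : ∀ s, (t s - z0 - ℓ s * η).re ≠ 0) :
    AnalyticAt ℂ (fun z => Bt η ξm ℓ m ε j z t) z0 := by
  have h3 : ∀ s, sinh (t s + sg ε j * z0 - ℓ s * η) ≠ 0 := by
    intro s; unfold sg; split_ifs
    · simpa using sinh_ne_of_re (h1 s)
    · simpa [← sub_eq_add_neg] using sinh_ne_of_re (h2 s)
  have h4 : ∀ s, sinh (t s - sg ε j * z0 - ℓ s * η) ≠ 0 := by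
    intro s; unfold sg; split_ifs
    · simpa using sinh_ne_of_re (h2 s)
    · simpa using sinh_ne_of_re (h1 s)
  unfold Bt
  refine AnalyticAt.fun_mul (AnalyticAt.fun_mul (AnalyticAt.fun_div (AnalyticAt.fun_mul analyticAt_const
    (analytic_sinh (by fun_prop))) (analytic_sinh (by fun_prop)) (h3 _)) ?_) ?_
  · refine Finset.analyticAt_fun_prod _ fun s _ => ?_
    exact AnalyticAt.fun_div (analytic_sinh (by fun_prop)) (analytic_sinh (by fun_prop)) (h3 s)
  · refine Finset.analyticAt_fun_prod _ fun s _ => ?_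
    exact AnalyticAt.fun_div (analytic_sinh (by fun_prop)) (analytic_sinh (by fun_prop)) (h4 s)

lemma h1f_analytic (τ η : ℂ) (hτ : τ.re < 0) {f : ℂ → ℂ} {z0 : ℂ} (hf : AnalyticAt ℂ f z0)
    (h : 0 < (f z0 - η).re) : AnalyticAt ℂ (fun z => h1f τ η (f z)) z0 := by
  unfold h1f
  exact AnalyticAt.fun_div (AnalyticAt.fun_mul (AnalyticAt.fun_mul analyticAt_const (by fun_prop))
    (analytic_poch hτ (by fun_prop))) (analytic_poch hτ (by fun_prop))
    (poch_exp_ne _ _ hτ (re_neg_of h))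

lemma update_analytic {M : ℕ} (x : Fin M → ℂ) (j i : Fin M) (z0 : ℂ) :
    AnalyticAt ℂ (fun z => Function.update x j z i) z0 := by
  by_cases h : i = j
  · subst h; simp only [Function.update_self]; exact analyticAt_id
  · simpa [Function.update_of_ne h] using analyticAt_const

lemma pairN_analytic {M N : ℕ} (η : ℂ) (m : Fin M → Fin N) (p : Fin M × Fin M) {f g : ℂ → ℂ}
    {z0 : ℂ} (hf : AnalyticAt ℂ f z0) (hg : AnalyticAt ℂ g z0) :
    AnalyticAt ℂ (fun z => pairN η m p (f z) (g z)) z0 := by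
  unfold pairN
  refine AnalyticAt.fun_mul (analytic_sinh (by fun_prop)) ?_
  split_ifs
  · exact analytic_sinh (by fun_prop)
  · exact AnalyticAt.fun_neg (analytic_sinh (by fun_prop))
  · exact analytic_sinh (by fun_prop)

lemma Gf_analytic (τ η ξp ξm : ℂ) (hτ : τ.re < 0) {N M : ℕ} (ℓ : Fin N → ℂ) (k m : Fin M → Fin N)
    (x : Fin M → ℂ) (j : Fin M) (z0 : ℂ) (t : Fin N → ℂ)
    (ha : ∀ s, 0 < (t s + z0 + ℓ s * η).re)
    (hb : ∀ s, s ≤ k j → 0 < (t s - z0 + ℓ s * η).re)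
    (hc : ∀ s, k j ≤ s → 0 < (z0 - t s + ℓ s * η).re)
    (hd : ∀ s, 0 < (t s + z0 - ℓ s * η).re)
    (he : ∀ s, s < k j → 0 < (t s - z0 - ℓ s * η).re)
    (h1 : 0 < (xiP τ η ξp + z0).re) (h2 : 0 < (xiM η ξm + z0).re)
    (hg1 : ∀ i, i ≠ j → 0 < (x i + z0 - η).re)
    (hg2 : ∀ i, i < j → 0 < (x i - z0 - η).re)
    (hg3 : ∀ i, j < i → 0 < (z0 - x i - η).re) :
    AnalyticAt ℂ (fun z => Gf τ η ξp ξm ℓ k m (Function.update x j z) t) z0 := by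
  have he' : ∀ s, (t s - z0 - ℓ s * η).re ≠ 0 := by
    intro s
    rcases lt_or_ge s (k j) with h | h
    · exact (he s h).ne'
    · have := hc s h
      simp only [Complex.sub_re, Complex.add_re] at this ⊢
      intro h0
      linarith
  unfold Gf
  refine AnalyticAt.fun_mul analyticAt_const (Finset.analyticAt_fun_sum _ fun m' _ =>
    Finset.analyticAt_fun_sum _ fun ε _ => AnalyticAt.fun_mul (AnalyticAt.fun_mul ?_ ?_) ?_)
  · refine Finset.analyticAt_fun_prod _ fun i _ => ?_
    by_cases h : i = j
    · subst h
      simpa using At_analytic τ η ξp ξm hτ ℓ k i z0 t ha hb hc h1 h2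
    · simpa [Function.update_of_ne h] using analyticAt_const
  · refine Finset.analyticAt_fun_prod _ fun i _ => ?_
    by_cases h : i = j
    · subst h
      simpa using Bt_analytic η ξm ℓ m' ε i z0 t (fun s => (hd s).ne') he'
    · simpa [Function.update_of_ne h] using analyticAt_const
  · refine Finset.analyticAt_fun_prod _ fun p hp => ?_
    have hp : p.1 < p.2 := (Finset.mem_filter.1 hp).2
    refine AnalyticAt.fun_mul ?_ (pairN_analytic η m' p
      (AnalyticAt.fun_mul analyticAt_const (update_analytic x j _ z0))
      (AnalyticAt.fun_mul analyticAt_const (update_analytic x j _ z0)))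
    have u1 := update_analytic x j p.1 z0
    have u2 := update_analytic x j p.2 z0
    by_cases e1 : p.1 = j
    · have e2 : p.2 ≠ j := by rw [← e1]; exact hp.ne'
      refine AnalyticAt.fun_mul (h1f_analytic τ η hτ (u1.fun_add u2) ?_)
        (h1f_analytic τ η hτ (u1.fun_sub u2) ?_)
      · rw [e1, Function.update_self, Function.update_of_ne e2, add_comm z0]
        exact hg1 _ e2
      · rw [e1, Function.update_self, Function.update_of_ne e2]
        exact hg3 _ (e1 ▸ hp)
    · by_cases e2 : p.2 = j
      · refine AnalyticAt.fun_mul (h1f_analytic τ η hτ (u1.fun_add u2) ?_)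
          (h1f_analytic τ η hτ (u1.fun_sub u2) ?_)
        · rw [e2, Function.update_self, Function.update_of_ne e1]
          exact hg1 _ e1
        · rw [e2, Function.update_self, Function.update_of_ne e1]
          exact hg2 _ (e2 ▸ hp)
      · simpa [Function.update_of_ne e1, Function.update_of_ne e2] using analyticAt_const

lemma gam_gap {M N : ℕ} (k : Fin M → Fin N) (hk : Monotone k) (g : Fin M → ℝ) (c : ℝ)
    (H : ∀ r : Fin N, ∀ s : ℕ, s + 1 < nk k r →
      ∀ (h1 : blockIdx k r s < M) (h2 : blockIdx k r (s + 1) < M),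
        g ⟨blockIdx k r (s + 1), h2⟩ ≤ g ⟨blockIdx k r s, h1⟩ ∧
          g ⟨blockIdx k r (s + 1), h2⟩ + c < g ⟨blockIdx k r s, h1⟩)
    (i i' : Fin M) (hii : i < i') (hkk : k i = k i') : g i' + c < g i := by
  set r := k i with hr
  set C := ∑ s' ∈ Finset.univ.filter (fun s' : Fin N => s' < r), nk k s' with hC
  have hC1 : C = (Finset.univ.filter fun a : Fin M => k a < r).card := by
    rw [Finset.card_eq_sum_card_fiberwise (f := k) (t := Finset.univ.filter (fun s' : Fin N => s' < r))]
    · refine Finset.sum_congr rfl fun s hs => ?_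
      unfold nk
      congr 1
      ext a
      have := (Finset.mem_filter.1 hs).2
      simp only [Finset.mem_filter, Finset.mem_univ, true_and]
      constructor
      · rintro rfl; exact ⟨this, rfl⟩
      · exact fun h => h.2
    · intro a ha
      simpa using ha
  have hlow : C ≤ (i : ℕ) := by
    rw [hC1, ← Fin.card_Iio i]
    refine Finset.card_le_card fun a ha => ?_
    have ha := (Finset.mem_filter.1 ha).2
    rw [Finset.mem_Iio]
    by_contra h
    exact absurd (hk (not_lt.1 h)) (not_le.2 ha)
  have hhigh : (i' : ℕ) + 1 ≤ C + nk k r := by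
    rw [hC1, nk, ← Finset.card_union_of_disjoint, ← Fin.card_Iic i']
    · refine Finset.card_le_card fun a ha => ?_
      rw [Finset.mem_Iic] at ha
      have := hk ha
      rw [← hkk] at this
      simpa [← le_iff_lt_or_eq] using this
    · rw [Finset.disjoint_left]
      intro a h1 h2
      simp at h1 h2
      exact h1.ne h2
  have step : ∀ a : ℕ, ∀ (h : a + 1 < M), (i : ℕ) ≤ a → a + 1 ≤ i' →
      g ⟨a + 1, h⟩ ≤ g ⟨a, by omega⟩ ∧ g ⟨a + 1, h⟩ + c < g ⟨a, by omega⟩ := by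
    intro a h h1 h2
    obtain ⟨s, rfl⟩ : ∃ s, a = C + s := ⟨a - C, by omega⟩
    exact H r s (by omega) (by unfold blockIdx; omega) h
  have main : ∀ n : ℕ, ∀ (h : (i : ℕ) + 1 + n < M), (i : ℕ) + 1 + n ≤ i' →
      g ⟨i + 1 + n, h⟩ + c < g i := by
    intro n
    induction n with
    | zero => intro h h'; exact (step i (by omega) le_rfl (by omega)).2
    | succ n ih =>
      intro h h'
      have h1 := ih (by omega) (by omega)
      have h2 := (step (i + 1 + n) (by omega) (by omega) (by omega)).1
      have h3 : g ⟨i + 1 + (n + 1), h⟩ ≤ g ⟨i + 1 + n, by omega⟩ := h2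
      linarith
  obtain ⟨n, hn⟩ : ∃ n, (i' : ℕ) = i + 1 + n := ⟨i' - (i + 1), by have : (i : ℕ) < i' := hii; omega⟩
  have := main n (by omega) (by omega)
  have e : (⟨i + 1 + n, by omega⟩ : Fin M) = i' := Fin.ext hn.symm
  rwa [e] at this

lemma t_gap {N : ℕ} (T : Fin N → ℝ) (c : ℝ) (hc : 0 ≤ c)
    (H : ∀ i j : Fin N, (j : ℕ) = (i : ℕ) + 1 → T i - T j > c) (i j : Fin N) (hij : i < j) :
    T i - T j > c := by
  have main : ∀ n : ℕ, ∀ (h : (i : ℕ) + 1 + n < N), T i - T ⟨i + 1 + n, h⟩ > c := by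
    intro n
    induction n with
    | zero => intro h; exact H _ _ rfl
    | succ n ih =>
      intro h
      have h1 := ih (by omega)
      have h2 := H ⟨i + 1 + n, by omega⟩ ⟨i + 1 + (n + 1), h⟩ rfl
      linarith
  obtain ⟨n, hn⟩ : ∃ n, (j : ℕ) = i + 1 + n := ⟨j - (i + 1), by have : (i : ℕ) < j := hij; omega⟩
  have := main n (by omega)
  have e : (⟨i + 1 + n, by omega⟩ : Fin N) = j := Fin.ext hn.symm
  rwa [e] at this

/-- analogue of Lemma `lem:integrandanalyticinstrip`: the function
`x_j ↦ w_k(x;t+τe_{k_j}) β_m(x;t+τe_{k_j}) / Φ_k(t+τe_{k_j})` is `π√−1`-periodic and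
has no poles in the vertical strip `S_τ(t_{k_j}+γ_j+τ)`. -/
theorem stmt14 (τ η ξp ξm : ℂ) (hτ : τ.re < 0) (M N : ℕ) (hN : 1 ≤ N)
    (ℓ : Fin N → ℂ) (k : Fin M → Fin N) (hk : Monotone k)
    (hD : Dmn η ℓ k)
    (hτ1 : ∀ r : Fin N, -τ.re ≤ (ℓ r * η).re)
    (hτ2 : ∀ r : Fin N,
      -τ.re < ((2 * ℓ r + 1 - (nk k r : ℂ)) * η).re / ((nk k r : ℝ) + 1))
    (γ : Fin M → ℂ) (hγ : GamTau τ η ℓ k γ) (j : Fin M)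
    (t : Fin N → ℂ) (ht : t ∈ AtilTau τ η ξp ξm ℓ) (x : Fin M → ℂ)
    (hxlt : ∀ i : Fin M, i < j → ∃ s ∈ Set.Icc (0 : ℝ) Real.pi,
      x i = t (k i) + γ i + (s : ℂ) * I)
    (hxgt : ∀ i : Fin M, j < i → ∃ s ∈ Set.Icc (0 : ℝ) Real.pi,
      x i = t (k i) + γ i + (if k i = k j then τ else 0) + (s : ℂ) * I) :
    ∀ m : Fin M → Fin N, Monotone m →
      (∀ z : ℂ,
        w0 τ η ξp ξm ℓ k (Function.update x j (z + (Real.pi : ℂ) * I))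
            (fun s => t s + if s = k j then τ else 0) *
          betaF η ξm ℓ m (Function.update x j (z + (Real.pi : ℂ) * I))
            (fun s => t s + if s = k j then τ else 0) =
        w0 τ η ξp ξm ℓ k (Function.update x j z)
            (fun s => t s + if s = k j then τ else 0) *
          betaF η ξm ℓ m (Function.update x j z)
            (fun s => t s + if s = k j then τ else 0)) ∧
      ∃ U : Set ℂ, IsOpen U ∧
        {z : ℂ | (t (k j) + γ j + τ).re ≤ z.re ∧ z.re ≤ (t (k j) + γ j).re} ⊆ U ∧
        ∃ G : ℂ → ℂ, DifferentiableOn ℂ G U ∧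
          ∀ z ∈ U,
            w0DenomOK τ η ξp ξm ℓ k (Function.update x j z)
                (fun s => t s + if s = k j then τ else 0) →
            betaDenomOK η ℓ (Function.update x j z)
                (fun s => t s + if s = k j then τ else 0) →
            G z = w0 τ η ξp ξm ℓ k (Function.update x j z)
                  (fun s => t s + if s = k j then τ else 0) *
                betaF η ξm ℓ m (Function.update x j z)
                  (fun s => t s + if s = k j then τ else 0) := by
  intro m _
  constructor
  · intro z
    have hx : ∀ i, Function.update x j (z + (Real.pi : ℂ) * I) i =
        Function.update x j z i + ((if i = j then 1 else 0 : ℤ) : ℂ) * (Real.pi * I) := by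
      intro i
      by_cases h : i = j
      · subst h; simp
      · simp [Function.update_of_ne h, h]
    rw [w0_per τ η ξp ξm ℓ k _ _ _ _ hx, betaF_per η ξm ℓ m _ _ _ _ hx]
  · refine ⟨{z | AnalyticAt ℂ (fun z => Gf τ η ξp ξm ℓ k m (Function.update x j z)
        (fun s => t s + if s = k j then τ else 0)) z}, isOpen_analyticAt ℂ _, ?_,
      fun z => Gf τ η ξp ξm ℓ k m (Function.update x j z)
        (fun s => t s + if s = k j then τ else 0), fun z hz =>
        (AnalyticAt.differentiableAt hz).differentiableWithinAt,
      fun z _ hw hb => Gf_eq τ η ξp ξm ℓ k m _ _ hw hb⟩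
    rintro z ⟨hz1, hz2⟩
    obtain ⟨⟨-, hG1⟩, hG2, hG3⟩ := hγ
    obtain ⟨hA1, hA2⟩ := ht
    have hL : ∀ s, (ℓ s * η).re ≤ Lam η ℓ := fun s =>
      le_ciSup (f := fun s => (ℓ s * η).re) (Set.finite_range _).bddAbove s
    have hgap := gam_gap k hk (fun i => (γ i).re) (η - τ).re
      (fun r s hs h1 h2 => ⟨(hG1 r s hs h1 h2).1, hG3 r s hs h1 h2⟩)
    have hLam : 0 < Lam η ℓ := by
      have h1 := hτ1 (k j); have h2 := hL (k j); linarith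
    have hm0 : 0 ≤ max η.re 0 := le_max_right _ _
    have hm1 : η.re ≤ max η.re 0 := le_max_left _ _
    have htg := t_gap (fun s => (t s).re) (2 * Lam η ℓ + max η.re 0 - τ.re) (by linarith)
      (fun a b hab => by simpa using hA1 a b hab)
    set B := max (max (η / 2).re 0) (max (-xiP τ η ξp).re (-xiM η ξm).re) with hB
    have hB1 : η.re / 2 ≤ B := by
      have : (η / 2).re ≤ B := le_trans (le_max_left _ _) (le_max_left _ _)
      simpa using this
    have hB0 : 0 ≤ B := le_trans (le_max_right _ _) (le_max_left _ _)
    have hB2 : -(xiP τ η ξp).re ≤ B := le_trans (le_max_left _ _) (le_max_right _ _)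
    have hB3 : -(xiM η ξm).re ≤ B := le_trans (le_max_right _ _) (le_max_right _ _)
    have hts : ∀ s, (t s).re > Lam η ℓ + B - τ.re := by
      intro s
      have hlast := hA2 ⟨N - 1, by omega⟩ rfl
      by_cases h : (s : ℕ) = N - 1
      · exact hA2 s h
      · have h1 := htg s ⟨N - 1, by omega⟩ (by rw [Fin.lt_def]; have := s.2; simp; omega)
        linarith
    simp only [Complex.add_re, Complex.sub_re] at hz1 hz2 hG2 hgap
    have hg := hG2 j
    have hLj := hL (k j)
    have hzpos : Lam η ℓ + B + (γ j).re < z.re := by have := hts (k j); linarith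
    -- bounds on the shifted parameters
    have hsh : ∀ s, ((if s = k j then τ else 0 : ℂ)).re ≤ 0 ∧
        τ.re ≤ ((if s = k j then τ else 0 : ℂ)).re := by
      intro s; split_ifs
      · exact ⟨hτ.le, le_rfl⟩
      · simp; exact hτ.le
    have hxi1 : ∀ i, i < j → (x i).re = (t (k i)).re + (γ i).re := by
      intro i hi; obtain ⟨s, -, h⟩ := hxlt i hi; rw [h]; simp
    have hxi2 : ∀ i, j < i → (x i).re = (t (k i)).re + (γ i).re +
        ((if k i = k j then τ else 0 : ℂ)).re := by
      intro i hi; obtain ⟨s, -, h⟩ := hxgt i hi; rw [h]; simp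
    have hxB : ∀ i, i ≠ j → B < (x i).re := by
      intro i hi
      have h1 := hts (k i); have h2 := hG2 i; have h3 := hL (k i); have h4 := hsh (k i)
      rcases lt_or_gt_of_ne hi with h | h
      · rw [hxi1 i h]; linarith
      · rw [hxi2 i h]; linarith
    refine Gf_analytic τ η ξp ξm hτ ℓ k m x j z _ ?_ ?_ ?_ ?_ ?_ ?_ ?_ ?_ ?_ ?_ <;>
      simp only [Complex.add_re, Complex.sub_re]
    · intro s
      have h1 := hts s; have h2 := hsh s; have h3 := hτ1 s
      linarith
    · intro s hs
      have h3 := hτ1 s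
      rcases hs.lt_or_eq with h | h
      · have h1 := htg s (k j) h; have h2 := hsh s
        linarith
      · rw [if_pos h, h]; linarith
    · intro s hs
      have h3 := hτ1 s
      rcases hs.lt_or_eq with h | h
      · have h1 := htg (k j) s h; have h2 := hsh s
        linarith
      · rw [if_pos h.symm, ← h]; linarith
    · intro s
      have h1 := hts s; have h2 := hsh s; have h3 := hL s
      linarith
    · intro s h
      have h1 := htg s (k j) h; have h2 := hL s
      rw [if_neg h.ne]
      simp only [Complex.zero_re]
      linarith
    · linarith
    · linarith
    · intro i hi
      have := hxB i hi
      linarith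
    · intro i hi
      rw [hxi1 i hi]
      have h2 := hG2 i; have h3 := hL (k i)
      rcases (hk hi.le).lt_or_eq with h | h
      · have h1 := htg _ _ h
        linarith
      · have h1 := hgap i j hi h
        rw [h]; linarith
    · intro i hi
      rw [hxi2 i hi]
      have h2 := hG2 i; have h3 := hL (k i)
      rcases (hk hi.le).lt_or_eq with h | h
      · have h1 := htg _ _ h; have h4 := hsh (k i)
        linarith
      · have h1 := hgap j i hi h
        rw [if_pos h.symm, ← h]; linarith

end BQKZ
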